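/- Fix d ≥ 3 and a root α in R^d. Let E = {(x,y) ∈ R^d × R^d : ⟨α,x⟩·⟨α,y⟩ > 0}. Define T(x,y) = (|x-y|^{-d} - |x - σ_α y|^{-d}) / (⟨α,x⟩·⟨α,y⟩) on E. Then there exist constants 0 < c₁ ≤ c₂ (depending only on d and |α|) such that c₁/(|x-y|^d·|x - σ_α y|²) ≤ T(x,y) ≤ c₂/(|x-y|^d·|x - σ_α y|²) for all (x,y) ∈ E with x ≠ y. -/

import Mathlib

local notation "⟪" x ", " y "⟫" => @inner ℝ _ _ x y

/-!
Put `a = |x - y|`, `b = |x - σ_α y|` and `t = a² / b²`. The identity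
`b² - a² = (4 / |α|²) ⟪α, x⟫ ⟪α, y⟫` turns the quantity to be estimated into
`(4 / |α|²) · (1 - t ^ (s / 2)) / (1 - t) / (a ^ s b²)`, where `s` is the exponent.
By Bernoulli's inequality, the quotient `(1 - t ^ (s / 2)) / (1 - t)` lies between `1` and `s / 2`
for every `t ∈ [0, 1)`.
-/

section Bernoulli

variable {p q s t a b : ℝ}

theorem min_one_mul_one_sub_le_one_sub_rpow (hp : 0 ≤ p) (ht₀ : 0 ≤ t) (ht₁ : t ≤ 1) :
    min 1 p * (1 - t) ≤ 1 - t ^ p := by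
  rcases le_total 1 p with h1p | hp1
  · rw [min_eq_left h1p, one_mul]
    exact sub_le_sub_left (Real.rpow_le_self_of_le_one ht₀ ht₁ h1p) 1
  · have bernoulli : (1 + (t - 1)) ^ p ≤ 1 + p * (t - 1) :=
      rpow_one_add_le_one_add_mul_self (by linarith) hp hp1
    rw [add_sub_cancel] at bernoulli
    rw [min_eq_right hp1]
    linarith

theorem one_sub_rpow_le_max_one_mul_one_sub (ht₀ : 0 ≤ t) (ht₁ : t ≤ 1) :
    1 - t ^ p ≤ max 1 p * (1 - t) := by
  rcases le_total 1 p with h1p | hp1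
  · have bernoulli : 1 + p * (t - 1) ≤ (1 + (t - 1)) ^ p :=
      one_add_mul_self_le_rpow_one_add (by linarith) h1p
    rw [add_sub_cancel] at bernoulli
    rw [max_eq_right h1p]
    linarith
  · rw [max_eq_left hp1, one_mul]
    exact sub_le_sub_left (Real.self_le_rpow_of_le_one ht₀ ht₁ hp1) 1

theorem one_div_rpow_sub_one_div_rpow_eq (ha : 0 < a) (hb : 0 < b) (hq : q ≠ 0) :
    1 / a ^ s - 1 / b ^ s = (1 - ((a / b) ^ q) ^ (s / q)) / a ^ s := by
  have ha' : a ^ s ≠ 0 := (Real.rpow_pos_of_pos ha s).ne'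
  rw [← Real.rpow_mul (by positivity), mul_div_cancel₀ s hq, Real.div_rpow ha.le hb.le]
  field_simp

theorem rpow_sub_rpow_div_rpow_mul_rpow_eq (hb : 0 < b) (ha : 0 ≤ a) :
    (b ^ q - a ^ q) / (a ^ s * b ^ q) = (1 - (a / b) ^ q) / a ^ s := by
  have hb' : b ^ q ≠ 0 := (Real.rpow_pos_of_pos hb q).ne'
  rw [Real.div_rpow ha hb.le, one_sub_div hb', div_div, mul_comm (a ^ s)]

theorem min_mul_le_one_div_rpow_sub_one_div_rpow (hs : 0 ≤ s) (hq : 0 < q) (ha : 0 < a)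
    (hab : a ≤ b) :
    min 1 (s / q) * ((b ^ q - a ^ q) / (a ^ s * b ^ q)) ≤ 1 / a ^ s - 1 / b ^ s := by
  have hb : 0 < b := ha.trans_le hab
  have ratio_le_one : (a / b) ^ q ≤ 1 :=
    Real.rpow_le_one (by positivity) ((div_le_one hb).2 hab) hq.le
  rw [one_div_rpow_sub_one_div_rpow_eq ha hb hq.ne', rpow_sub_rpow_div_rpow_mul_rpow_eq hb ha.le,
    ← mul_div_assoc]
  gcongr
  exact min_one_mul_one_sub_le_one_sub_rpow (by positivity) (by positivity) ratio_le_one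

theorem one_div_rpow_sub_one_div_rpow_le_max_mul (hq : 0 < q) (ha : 0 < a) (hab : a ≤ b) :
    1 / a ^ s - 1 / b ^ s ≤ max 1 (s / q) * ((b ^ q - a ^ q) / (a ^ s * b ^ q)) := by
  have hb : 0 < b := ha.trans_le hab
  have ratio_le_one : (a / b) ^ q ≤ 1 :=
    Real.rpow_le_one (by positivity) ((div_le_one hb).2 hab) hq.le
  rw [one_div_rpow_sub_one_div_rpow_eq ha hb hq.ne', rpow_sub_rpow_div_rpow_mul_rpow_eq hb ha.le,
    ← mul_div_assoc]
  gcongr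
  exact one_sub_rpow_le_max_one_mul_one_sub (by positivity) ratio_le_one

end Bernoulli

section Reflection

variable {E : Type*} [NormedAddCommGroup E] [InnerProductSpace ℝ E] {α x y : E}

theorem reflection_orthogonal_singleton_apply (α y : E) :
    (ℝ ∙ α)ᗮ.reflection y = y - (2 * ⟪α, y⟫ / ‖α‖ ^ 2) • α := by
  rw [Submodule.reflection_orthogonal_apply, Submodule.reflection_singleton_apply, neg_sub,
    mul_div_assoc, mul_smul, two_smul ℝ, two_nsmul, RCLike.ofReal_real_eq_id, id]

theorem norm_sub_reflection_sq (α x y : E) :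
    ‖x - (ℝ ∙ α)ᗮ.reflection y‖ ^ 2 = ‖x - y‖ ^ 2 + 4 / ‖α‖ ^ 2 * (⟪α, x⟫ * ⟪α, y⟫) := by
  obtain rfl | hα := eq_or_ne α 0
  · simp only [reflection_orthogonal_singleton_apply, inner_zero_left, smul_zero, sub_zero,
      mul_zero, add_zero]
  have hα' : ‖α‖ ≠ 0 := norm_ne_zero_iff.mpr hα
  rw [reflection_orthogonal_singleton_apply, ← sub_add, norm_add_sq_real, inner_smul_right,
    norm_smul, mul_pow, Real.norm_eq_abs, sq_abs, inner_sub_left, real_inner_comm α x,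
    real_inner_comm α y]
  field_simp
  ring

theorem norm_sub_le_norm_sub_reflection (h : 0 ≤ ⟪α, x⟫ * ⟪α, y⟫) :
    ‖x - y‖ ≤ ‖x - (ℝ ∙ α)ᗮ.reflection y‖ := by
  rw [← sq_le_sq₀ (norm_nonneg _) (norm_nonneg _), norm_sub_reflection_sq]
  exact le_add_of_nonneg_right (by positivity)

end Reflection

theorem stmt_13_general (E : Type*) [NormedAddCommGroup E] [InnerProductSpace ℝ E] {s r : ℝ}
    (hs : 0 < s) (hr : 0 < r) :
    ∃ c₁ c₂ : ℝ, 0 < c₁ ∧ c₁ ≤ c₂ ∧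
      ∀ α : E, ‖α‖ = r → ∀ x y : E, 0 < ⟪α, x⟫ * ⟪α, y⟫ → x ≠ y →
        c₁ / (‖x - y‖ ^ s * ‖x - (ℝ ∙ α)ᗮ.reflection y‖ ^ 2)
            ≤ (1 / ‖x - y‖ ^ s - 1 / ‖x - (ℝ ∙ α)ᗮ.reflection y‖ ^ s) / (⟪α, x⟫ * ⟪α, y⟫) ∧
        (1 / ‖x - y‖ ^ s - 1 / ‖x - (ℝ ∙ α)ᗮ.reflection y‖ ^ s) / (⟪α, x⟫ * ⟪α, y⟫)
            ≤ c₂ / (‖x - y‖ ^ s * ‖x - (ℝ ∙ α)ᗮ.reflection y‖ ^ 2) := by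
  refine ⟨min 1 (s / 2) * (4 / r ^ 2), max 1 (s / 2) * (4 / r ^ 2), by positivity,
    by gcongr; exact min_le_max, ?_⟩
  rintro α rfl x y hxy hne
  have hpos : 0 < ‖x - y‖ := norm_sub_pos_iff.mpr hne
  have hle := norm_sub_le_norm_sub_reflection hxy.le
  have hsq : ‖x - (ℝ ∙ α)ᗮ.reflection y‖ ^ (2 : ℝ) - ‖x - y‖ ^ (2 : ℝ) =
      4 / ‖α‖ ^ 2 * (⟪α, x⟫ * ⟪α, y⟫) := by
    rw [Real.rpow_two, Real.rpow_two, norm_sub_reflection_sq, add_sub_cancel_left]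
  have lower := min_mul_le_one_div_rpow_sub_one_div_rpow hs.le two_pos hpos hle
  have upper := one_div_rpow_sub_one_div_rpow_le_max_mul (s := s) two_pos hpos hle
  rw [hsq, Real.rpow_two] at lower upper
  have mul_div_mul_eq (c k m p : ℝ) : c * k / m * p = c * (k * p / m) := by ring
  rw [le_div_iff₀ hxy, div_le_iff₀ hxy, mul_div_mul_eq, mul_div_mul_eq]
  exact ⟨lower, upper⟩

/-- Fix `d ≥ 3` and a root `α ≠ 0` in `ℝ^d`. On
`E = {(x,y) : ⟪α,x⟫·⟪α,y⟫ > 0}`, the quantity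
`T(x,y) = (|x-y|^{-d} - |x - σ_α y|^{-d}) / (⟪α,x⟫·⟪α,y⟫)` satisfies
`T(x,y) ≍ 1/(|x-y|^d·|x - σ_α y|²)` with constants depending only on `d` and `|α|`. -/
theorem stmt_13 {d : ℕ} (hd : 3 ≤ d) (α : EuclideanSpace ℝ (Fin d)) (hα : α ≠ 0) :
    ∃ c₁ c₂ : ℝ, 0 < c₁ ∧ c₁ ≤ c₂ ∧
      ∀ x y : EuclideanSpace ℝ (Fin d),
        0 < ⟪α, x⟫ * ⟪α, y⟫ → x ≠ y →
        c₁ / (‖x - y‖ ^ d * ‖x - (y - (2 * ⟪α, y⟫ / ‖α‖ ^ 2) • α)‖ ^ 2)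
            ≤ (1 / ‖x - y‖ ^ d - 1 / ‖x - (y - (2 * ⟪α, y⟫ / ‖α‖ ^ 2) • α)‖ ^ d)
                / (⟪α, x⟫ * ⟪α, y⟫) ∧
        (1 / ‖x - y‖ ^ d - 1 / ‖x - (y - (2 * ⟪α, y⟫ / ‖α‖ ^ 2) • α)‖ ^ d)
                / (⟪α, x⟫ * ⟪α, y⟫)
            ≤ c₂ / (‖x - y‖ ^ d * ‖x - (y - (2 * ⟪α, y⟫ / ‖α‖ ^ 2) • α)‖ ^ 2) := by
  obtain ⟨c₁, c₂, hc₁, hc₁₂, hbounds⟩ := stmt_13_general (EuclideanSpace ℝ (Fin d))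
    (s := d) (by positivity) (norm_pos_iff.mpr hα)
  exact ⟨c₁, c₂, hc₁, hc₁₂, by
    simpa only [Real.rpow_natCast, reflection_orthogonal_singleton_apply] using hbounds α rfl⟩
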